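/- arXiv:2010.00546 — 2 statements merged into one kernel-verified Lean document; each statement's English description precedes it below -/
import Mathlib

section
/- Let α, μ ∈ (0,1] and λ₀ > 0. For every x > 0 the derivative of the Prabhakar function satisfies d/dx [E^μ_{α,1}(−λ₀ x^α)] = −λ₀ x^{α−1} Σ_{s=0}^∞ ((μ)_{s+1}/(s+1)!) (−λ₀ x^α)^s / Γ(αs + α), and the resulting transition density kernel W^{(μ)}_α(x) = −d/dx [E^μ_{α,1}(−λ₀ x^α)] is normalized: ∫_0^∞ W^{(μ)}_α(x) dx = 1. -/
open MeasureTheory Polynomial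

/-- Prabhakar (three-parameter Mittag-Leffler) function
`E^γ_{a,b}(z) = Σ_{s=0}^∞ (γ)_s z^s / (s! Γ(a s + b))`. -/
noncomputable def prabhakar (a b γ z : ℝ) : ℝ :=
  ∑' s : ℕ, (ascPochhammer ℝ s).eval γ * z ^ s / ((s.factorial : ℝ) * Real.Gamma (a * s + b))

/-!
Write `f x = E^μ_{α,1}(-λ₀ x^α)` and `W = -df/dx`. Termwise integration gives, for large `p`, the
Laplace transforms `p⁻¹ u(p)^μ` of `f` and `1 - u(p)^μ` of `W`, where
`u(p) = p^α / (λ₀ + p^α)`. Composition with `b ↦ b^α`, `α ∈ (0,1]`, and with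
`b ↦ b / (λ₀ + b)` preserves Bernstein functions, and reciprocals of Bernstein functions are
completely monotone; so both transforms, sampled along `c, c + 1, c + 2, …`, are completely
monotone sequences. These samples are the moments of `e^{-cx} f(x) dx` and `e^{-cx} W(x) dx` in the
variable `e^{-x}`, and approximation of test functions by Bernstein polynomials yields `f, W ≥ 0`.
Hence `f` decreases and is bounded below, so `W` is integrable on `(0, ∞)`. Its Laplace transform
is then analytic on `(0, ∞)`, the formula `1 - u(p)^μ` extends to every `p > 0`, and letting
`p → 0⁺` gives `∫ W = 1`.
-/

/-! ### Completely monotone sequences -/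

/-- `CompletelyMonotoneUpTo n f`: the differences of `f` of order at most `n`, taken with
alternating signs, are nonnegative. The order is kept in the definition because
`IsBernsteinSeq.inv` gains one order at a time. -/
def CompletelyMonotoneUpTo : ℕ → (ℕ → ℝ) → Prop
  | 0, f => ∀ m, 0 ≤ f m
  | n + 1, f => (∀ m, 0 ≤ f m) ∧ CompletelyMonotoneUpTo n fun m => f m - f (m + 1)

/-- The discrete analogue of a Bernstein function: a positive sequence whose increments are
completely monotone. -/
def IsBernsteinSeq (b : ℕ → ℝ) : Prop :=
  (∀ m, 0 < b m) ∧ ∀ n, CompletelyMonotoneUpTo n fun m => b (m + 1) - b m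

namespace CompletelyMonotoneUpTo

variable {n : ℕ} {f g : ℕ → ℝ}

lemma of_succ (h : CompletelyMonotoneUpTo (n + 1) f) : CompletelyMonotoneUpTo n f := by
  induction n generalizing f with
  | zero => exact h.1
  | succ n ih => exact ⟨h.1, ih h.2⟩

lemma const {c : ℝ} (hc : 0 ≤ c) : CompletelyMonotoneUpTo n fun _ => c := by
  induction n generalizing c with
  | zero => exact fun _ => hc
  | succ n ih => exact ⟨fun _ => hc, by simpa only [sub_self] using ih le_rfl⟩

lemma shift (h : CompletelyMonotoneUpTo n f) : CompletelyMonotoneUpTo n fun m => f (m + 1) := by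
  induction n generalizing f with
  | zero => exact fun m => h (m + 1)
  | succ n ih => exact ⟨fun m => h.1 (m + 1), ih h.2⟩

lemma add (hf : CompletelyMonotoneUpTo n f) (hg : CompletelyMonotoneUpTo n g) :
    CompletelyMonotoneUpTo n fun m => f m + g m := by
  induction n generalizing f g with
  | zero => exact fun m => add_nonneg (hf m) (hg m)
  | succ n ih =>
    refine ⟨fun m => add_nonneg (hf.1 m) (hg.1 m), ?_⟩
    simpa only [add_sub_add_comm] using ih hf.2 hg.2

lemma mul (hf : CompletelyMonotoneUpTo n f) (hg : CompletelyMonotoneUpTo n g) :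
    CompletelyMonotoneUpTo n fun m => f m * g m := by
  induction n generalizing f g with
  | zero => exact fun m => mul_nonneg (hf m) (hg m)
  | succ n ih =>
    refine ⟨fun m => mul_nonneg (hf.1 m) (hg.1 m), ?_⟩
    convert (ih hf.2 hg.of_succ.shift).add (ih hf.of_succ hg.2) using 2 with m
    ring

lemma setIntegral {X : Type*} [MeasurableSpace X] {ν : Measure X} {S : Set X}
    (hS : MeasurableSet S) {F : X → ℕ → ℝ} (hF : ∀ t ∈ S, CompletelyMonotoneUpTo n (F t))
    (hi : ∀ m, IntegrableOn (fun t => F t m) S ν) :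
    CompletelyMonotoneUpTo n fun m => ∫ t in S, F t m ∂ν := by
  induction n generalizing F with
  | zero => exact fun m => setIntegral_nonneg hS fun t ht => hF t ht m
  | succ n ih =>
    refine ⟨fun m => setIntegral_nonneg hS fun t ht => (hF t ht).1 m, ?_⟩
    simp only [← integral_sub (hi _) (hi _)]
    exact ih (fun t ht => (hF t ht).2) fun m => (hi m).sub (hi (m + 1))

end CompletelyMonotoneUpTo

namespace IsBernsteinSeq

variable {b : ℕ → ℝ}

lemma const_add_natCast {c : ℝ} (hc : 0 < c) : IsBernsteinSeq fun m => c + m :=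
  ⟨fun m => by positivity,
    fun n => by simpa using CompletelyMonotoneUpTo.const zero_le_one (n := n)⟩

lemma const_add (hb : IsBernsteinSeq b) {c : ℝ} (hc : 0 ≤ c) : IsBernsteinSeq fun m => c + b m :=
  ⟨fun m => add_pos_of_nonneg_of_pos hc (hb.1 m),
    by simpa only [add_sub_add_left_eq_sub] using hb.2⟩

lemma const_sub (hb : IsBernsteinSeq b) {C : ℝ} (hC : ∀ m, b m ≤ C) (n : ℕ) :
    CompletelyMonotoneUpTo n fun m => C - b m := by
  cases n with
  | zero => exact fun m => sub_nonneg.2 (hC m)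
  | succ n =>
    exact ⟨fun m => sub_nonneg.2 (hC m), by simpa only [sub_sub_sub_cancel_left] using hb.2 n⟩

lemma inv (hb : IsBernsteinSeq b) (n : ℕ) : CompletelyMonotoneUpTo n fun m => (b m)⁻¹ := by
  induction n with
  | zero => exact fun m => (inv_pos.2 (hb.1 m)).le
  | succ n ih =>
    refine ⟨fun m => (inv_pos.2 (hb.1 m)).le, ?_⟩
    convert ((hb.2 n).mul ih).mul ih.shift using 2 with m
    have := (hb.1 m).ne'
    have := (hb.1 (m + 1)).ne'
    field_simp

lemma rpow (hb : IsBernsteinSeq b) {p : ℝ} (hp : p ∈ Set.Icc (0 : ℝ) 1) :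
    IsBernsteinSeq fun m => b m ^ p := by
  refine ⟨fun m => Real.rpow_pos_of_pos (hb.1 m) p, fun n => ?_⟩
  rcases hp.1.eq_or_lt with rfl | h0
  · simpa using CompletelyMonotoneUpTo.const (n := n) le_rfl
  rcases hp.2.eq_or_lt with rfl | h1
  · simpa only [Real.rpow_one] using hb.2 n
  obtain ⟨ν, hν⟩ := Real.exists_measure_rpow_eq_integral_rpowIntegrand₀₁ (p := p) ⟨h0, h1⟩
  have integrable m := (hν (b m) (hb.1 m).le).1
  simp only [fun m => (hν (b m) (hb.1 m).le).2, ← integral_sub (integrable _) (integrable _)]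
  refine .setIntegral measurableSet_Ioi (fun t ht => ?_)
    fun m => (integrable (m + 1)).sub (integrable m)
  convert (CompletelyMonotoneUpTo.const (Real.rpow_nonneg (le_of_lt ht) p)).mul
    ((hb.const_add (le_of_lt ht)).inv (n + 1)).2 using 2 with m
  simp only [Real.rpowIntegrand₀₁]
  ring

lemma div_const_add (hb : IsBernsteinSeq b) {l : ℝ} (hl : 0 < l) :
    IsBernsteinSeq fun m => b m / (l + b m) := by
  have hlb := hb.const_add hl.le
  refine ⟨fun m => div_pos (hb.1 m) (hlb.1 m), fun n => ?_⟩
  convert (CompletelyMonotoneUpTo.const hl.le).mul (hlb.inv (n + 1)).2 using 2 with m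
  have := (hlb.1 m).ne'
  have := (hlb.1 (m + 1)).ne'
  field_simp
  ring

end IsBernsteinSeq

section Symbol

variable {α μ l c : ℝ}

lemma completelyMonotoneUpTo_one_sub_rpow_div (hα : α ∈ Set.Icc (0 : ℝ) 1)
    (hμ : μ ∈ Set.Icc (0 : ℝ) 1) (hl : 0 < l) (hc : 0 < c) (n : ℕ) :
    CompletelyMonotoneUpTo n fun m => 1 - ((c + m) ^ α / (l + (c + m) ^ α)) ^ μ := by
  have hb := (IsBernsteinSeq.const_add_natCast hc).rpow hα
  have hu := hb.div_const_add hl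
  refine (hu.rpow hμ).const_sub (fun m => Real.rpow_le_one (hu.1 m).le ?_ hμ.1) n
  exact div_le_one_of_le₀ (by linarith) (hb.const_add hl.le |>.1 m).le

lemma completelyMonotoneUpTo_inv_mul_rpow_div (hα : α ∈ Set.Icc (0 : ℝ) 1)
    (hμ : μ ∈ Set.Icc (0 : ℝ) 1) (hl : 0 < l) (hc : 0 < c) (n : ℕ) :
    CompletelyMonotoneUpTo n fun m => (c + m)⁻¹ * ((c + m) ^ α / (l + (c + m) ^ α)) ^ μ := by
  have hb := IsBernsteinSeq.const_add_natCast hc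
  have hαμ : 1 - α * μ ∈ Set.Icc (0 : ℝ) 1 := ⟨sub_nonneg.2 (mul_le_one₀ hα.2 hμ.1 hμ.2),
    sub_le_self _ (mul_nonneg hα.1 hμ.1)⟩
  convert ((hb.rpow hαμ).inv n).mul ((((hb.rpow hα).const_add hl.le).rpow hμ).inv n) using 2 with m
  have hp : 0 < c + (m : ℝ) := hb.1 m
  rw [Real.div_rpow (by positivity) (by positivity), ← Real.rpow_mul hp.le, Real.rpow_sub hp,
    Real.rpow_one]
  field_simp

end Symbol

/-! ### Signed densities with completely monotone moments -/

section Moments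

variable {X : Type*} [TopologicalSpace X] [MeasurableSpace X] [OpensMeasurableSpace X]
  {ν : Measure X} {T : X → unitInterval} {v : X → ℝ}

lemma integrable_comp_unitInterval_mul (hT : Continuous T) (hv : Integrable v ν)
    (q : C(unitInterval, ℝ)) : Integrable (fun x => q (T x) * v x) ν :=
  hv.bdd_mul (q.continuous.comp hT).aestronglyMeasurable (.of_forall fun _ => q.norm_coe_le_norm _)

lemma integral_pow_mul_one_sub_pow_nonneg (hT : Continuous T) (hv : Integrable v ν) {n : ℕ}
    (h : CompletelyMonotoneUpTo n fun m => ∫ x, (T x : ℝ) ^ m * v x ∂ν) (m : ℕ) :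
    0 ≤ ∫ x, (T x : ℝ) ^ m * ((1 - T x) ^ n * v x) ∂ν := by
  induction n generalizing v with
  | zero => simpa only [pow_zero, one_mul] using h m
  | succ n ih =>
    have integrable {u : X → ℝ} (hu : Integrable u ν) k :
        Integrable (fun x => (T x : ℝ) ^ k * u x) ν :=
      integrable_comp_unitInterval_mul hT hu ⟨fun t => (t : ℝ) ^ k, by fun_prop⟩
    have integrable_one_sub : Integrable (fun x => (1 - (T x : ℝ)) * v x) ν :=
      integrable_comp_unitInterval_mul hT hv ⟨fun t => 1 - (t : ℝ), by fun_prop⟩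
    have moments : CompletelyMonotoneUpTo n
        fun k => ∫ x, (T x : ℝ) ^ k * ((1 - (T x : ℝ)) * v x) ∂ν := by
      convert h.2 using 2 with k
      rw [← integral_sub (integrable hv k) (integrable hv (k + 1))]
      congr with x
      ring
    simpa only [pow_succ, mul_assoc] using ih integrable_one_sub moments

lemma integral_bernsteinApproximation_mul_nonneg (hT : Continuous T) (hv : Integrable v ν)
    (h : ∀ n, CompletelyMonotoneUpTo n fun m => ∫ x, (T x : ℝ) ^ m * v x ∂ν)
    {q : C(unitInterval, ℝ)} (hq : 0 ≤ q) (n : ℕ) :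
    0 ≤ ∫ x, bernsteinApproximation n q (T x) * v x ∂ν := by
  have integrable (k : Fin (n + 1)) :
      Integrable (fun x => bernstein n k (T x) * v x * q (bernstein.z k)) ν :=
    (integrable_comp_unitInterval_mul hT hv (bernstein n k)).mul_const _
  calc 0 ≤ ∑ k : Fin (n + 1), (∫ x, bernstein n k (T x) * v x ∂ν) * q (bernstein.z k) := by
        refine Finset.sum_nonneg fun k _ => mul_nonneg ?_ (hq _)
        convert mul_nonneg (Nat.cast_nonneg' (n.choose k))
          (integral_pow_mul_one_sub_pow_nonneg hT hv (h (n - k)) k) using 1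
        rw [← integral_const_mul]
        simp only [bernstein_apply, mul_assoc]
    _ = _ := by
        simp only [← integral_mul_const]
        rw [← integral_finsetSum _ fun k _ => integrable k]
        simp only [bernsteinApproximation.apply, Finset.sum_mul, smul_eq_mul]
        congr with x
        exact Finset.sum_congr rfl fun k _ => by ring

lemma integral_comp_mul_nonneg_of_moments (hT : Continuous T) (hv : Integrable v ν)
    (h : ∀ n, CompletelyMonotoneUpTo n fun m => ∫ x, (T x : ℝ) ^ m * v x ∂ν)
    {q : C(unitInterval, ℝ)} (hq : 0 ≤ q) :
    0 ≤ ∫ x, q (T x) * v x ∂ν := by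
  have approx := bernsteinApproximation_uniform q
  suffices Filter.Tendsto (fun n => ∫ x, bernsteinApproximation n q (T x) * v x ∂ν) Filter.atTop
      (nhds (∫ x, q (T x) * v x ∂ν)) from
    ge_of_tendsto' this (integral_bernsteinApproximation_mul_nonneg hT hv h hq)
  refine tendsto_integral_filter_of_dominated_convergence (fun x => (‖q‖ + 1) * ‖v x‖) ?_ ?_
    (hv.norm.const_mul _) ?_
  · exact .of_forall fun n => (integrable_comp_unitInterval_mul hT hv _).aestronglyMeasurable
  · filter_upwards [approx.norm.eventually_le_const (lt_add_one ‖q‖)] with n hn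
    refine .of_forall fun x => (norm_mul_le _ _).trans ?_
    gcongr
    exact (ContinuousMap.norm_coe_le_norm _ _).trans hn
  · exact .of_forall fun x => (((continuous_eval_const (T x)).tendsto q).comp approx).mul_const _

lemma nonneg_of_moments [ν.IsOpenPosMeasure] (hT : Topology.IsInducing T) (hv : Integrable v ν)
    (hvc : Continuous v) (h : ∀ n, CompletelyMonotoneUpTo n fun m => ∫ x, (T x : ℝ) ^ m * v x ∂ν)
    (x : X) : 0 ≤ v x := by
  by_contra! hneg
  obtain ⟨δ, hδ, hball⟩ : ∃ δ > 0, ∀ y, dist (T y) (T x) < δ → v y < 0 := by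
    have : {y | v y < 0} ∈ nhds x := (hvc.tendsto x).eventually_lt_const hneg
    rw [hT.nhds_eq_comap] at this
    exact (Metric.nhds_basis_ball.comap T).mem_iff.1 this
  let q : C(unitInterval, ℝ) := ⟨fun t => max 0 (δ - dist t (T x)), by fun_prop⟩
  have hq : 0 ≤ q := fun t => le_max_left _ _
  have test_nonneg : 0 ≤ fun y => -(q (T y) * v y) := fun y => by
    rcases lt_or_ge (dist (T y) (T x)) δ with hy | hy
    · exact neg_nonneg.2 (mul_nonpos_of_nonneg_of_nonpos (hq _) (hball y hy).le)
    · have : q (T y) = 0 := max_eq_left (sub_nonpos.2 hy)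
      simp [this]
  have test_ne_zero : -(q (T x) * v x) ≠ 0 := by
    have : q (T x) = δ := by simp [q, hδ.le]
    rw [this]
    exact neg_ne_zero.2 (mul_ne_zero hδ.ne' hneg.ne)
  have test_pos : 0 < ∫ y, -(q (T y) * v y) ∂ν :=
    integral_pos_of_integrable_nonneg_nonzero
      ((q.continuous.comp hT.continuous).mul hvc).neg
      (integrable_comp_unitInterval_mul hT.continuous hv q).neg test_nonneg test_ne_zero
  rw [integral_neg, Left.neg_pos_iff] at test_pos
  exact test_pos.not_ge (integral_comp_mul_nonneg_of_moments hT.continuous hv h hq)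

end Moments

/-! ### The Laplace transform -/

lemma integrable_tsum {X ι : Type*} [Countable ι] [MeasurableSpace X] {ν : Measure X}
    {F : ι → X → ℝ} (hF : ∀ i, Integrable (F i) ν) (hsum : Summable fun i => ∫ x, ‖F i x‖ ∂ν) :
    Integrable (fun x => ∑' i, F i x) ν := by
  refine ⟨(AEMeasurable.tsum fun i => (hF i).aemeasurable).aestronglyMeasurable, ?_⟩
  rw [hasFiniteIntegral_iff_enorm]
  calc ∫⁻ x, ‖∑' i, F i x‖ₑ ∂ν
      ≤ ∫⁻ x, ∑' i, ‖F i x‖ₑ ∂ν := lintegral_mono fun x => enorm_tsum_le_tsum_enorm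
    _ = ∑' i, ∫⁻ x, ‖F i x‖ₑ ∂ν := lintegral_tsum fun i => (hF i).aestronglyMeasurable.enorm
    _ = ∑' i, ENNReal.ofReal (∫ x, ‖F i x‖ ∂ν) := by
        simp only [ofReal_integral_norm_eq_lintegral_enorm (hF _)]
    _ < ⊤ := hsum.tsum_ofReal_lt_top

section Laplace

/-- `HasLaplace w p L`: the Laplace integral `∫₀^∞ e^{-px} w(x) dx` converges absolutely and
equals `L`. -/
def HasLaplace (w : ℝ → ℝ) (p L : ℝ) : Prop :=
  IntegrableOn (fun x => Real.exp (-(p * x)) * w x) (Set.Ioi 0) ∧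
    ∫ x in Set.Ioi (0 : ℝ), Real.exp (-(p * x)) * w x = L

variable {w φ : ℝ → ℝ}

lemma HasLaplace.congr {u : ℝ → ℝ} {p L : ℝ} (h : HasLaplace w p L)
    (hwu : Set.EqOn w u (Set.Ioi 0)) : HasLaplace u p L := by
  have key : Set.EqOn (fun x => Real.exp (-(p * x)) * w x) (fun x => Real.exp (-(p * x)) * u x)
      (Set.Ioi 0) := fun x hx => congrArg _ (hwu hx)
  exact ⟨h.1.congr_fun key measurableSet_Ioi, setIntegral_congr_fun measurableSet_Ioi key ▸ h.2⟩

lemma nonneg_of_hasLaplace {c : ℝ} (hw : ContinuousOn w (Set.Ioi 0))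
    (hL : ∀ p, c ≤ p → HasLaplace w p (φ p))
    (hφ : ∀ n, CompletelyMonotoneUpTo n fun m => φ (c + m)) {x : ℝ} (hx : 0 < x) : 0 ≤ w x := by
  let T : Set.Ioi (0 : ℝ) → unitInterval := fun x =>
    ⟨Real.exp (-x), (Real.exp_pos _).le, Real.exp_le_one_iff.2 (neg_nonpos.2 (le_of_lt x.2))⟩
  have hT : Topology.IsInducing T := by
    refine .of_comp (by fun_prop) continuous_subtype_val ?_
    exact Real.isOpenEmbedding_exp.isInducing.comp
      ((Homeomorph.neg ℝ).isInducing.comp .subtypeVal)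
  have : (volume.comap ((↑) : Set.Ioi (0 : ℝ) → ℝ)).IsOpenPosMeasure :=
    .comap _ isOpen_Ioi.isOpenEmbedding_subtypeVal
  have moment (m : ℕ) : ∫ y, (T y : ℝ) ^ m * (Real.exp (-(c * y)) * w y)
      ∂(volume.comap ((↑) : Set.Ioi (0 : ℝ) → ℝ)) = φ (c + m) := by
    rw [← (hL (c + m) (by simp)).2, ← integral_subtype_comap measurableSet_Ioi]
    congr with y
    rw [← mul_assoc, ← Real.exp_nat_mul, ← Real.exp_add]
    ring_nf
  have weighted_nonneg := nonneg_of_moments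
    (v := fun y : Set.Ioi (0 : ℝ) => Real.exp (-(c * y)) * w y) hT
    ((integrableOn_iff_comap_subtypeVal measurableSet_Ioi).1 (hL c le_rfl).1)
    (.mul (by fun_prop) (continuousOn_iff_continuous_domRestrict.1 hw))
    (by simpa only [moment] using hφ) ⟨x, hx⟩
  exact nonneg_of_mul_nonneg_right weighted_nonneg (Real.exp_pos _)

lemma ae_norm_exp_neg_mul_le_one {p : ℝ} (hp : 0 ≤ p) :
    ∀ᵐ x ∂volume.restrict (Set.Ioi (0 : ℝ)), ‖Real.exp (-(p * x))‖ ≤ 1 := by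
  filter_upwards [ae_restrict_mem measurableSet_Ioi] with x hx
  rw [Real.norm_eq_abs, Real.abs_exp, Real.exp_le_one_iff]
  exact neg_nonpos.2 (mul_nonneg hp (le_of_lt hx))

lemma analyticOnNhd_laplace (hw : IntegrableOn w (Set.Ioi 0)) (hw0 : ∀ x ∈ Set.Ioi 0, 0 ≤ w x) :
    AnalyticOnNhd ℝ (fun p => ∫ x in Set.Ioi (0 : ℝ), Real.exp (-(p * x)) * w x) (Set.Ioi 0) := by
  let ν := (volume.restrict (Set.Ioi 0)).withDensity fun x => ENNReal.ofReal (w x)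
  have density : AEMeasurable (fun x => ENNReal.ofReal (w x)) (volume.restrict (Set.Ioi 0)) :=
    hw.aestronglyMeasurable.aemeasurable.ennreal_ofReal
  have density_lt_top : ∀ᵐ x ∂volume.restrict (Set.Ioi (0 : ℝ)), ENNReal.ofReal (w x) < ⊤ :=
    .of_forall fun _ => ENNReal.ofReal_lt_top
  have integrand (p : ℝ) : Set.EqOn
      (fun x => (ENNReal.ofReal (w x)).toReal • Real.exp (p * -x))
      (fun x => Real.exp (-(p * x)) * w x) (Set.Ioi 0) := fun x hx => by
    simp only [ENNReal.toReal_ofReal (hw0 x hx), smul_eq_mul, mul_neg, mul_comm]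
  have laplace_eq_mgf : (fun p => ∫ x in Set.Ioi (0 : ℝ), Real.exp (-(p * x)) * w x) =
      ProbabilityTheory.mgf (fun x => -x) ν := by
    ext p
    rw [ProbabilityTheory.mgf, integral_withDensity_eq_integral_toReal_smul₀ density density_lt_top,
      setIntegral_congr_fun measurableSet_Ioi (integrand p)]
  have integrable_exp : Set.Ioi (0 : ℝ) ⊆ ProbabilityTheory.integrableExpSet (fun x => -x) ν := by
    intro p hp
    refine (integrable_withDensity_iff_integrable_smul₀' density density_lt_top).2 ?_
    refine IntegrableOn.congr_fun ?_ (integrand p).symm measurableSet_Ioi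
    exact hw.bdd_mul (by fun_prop) (ae_norm_exp_neg_mul_le_one (le_of_lt hp))
  rw [laplace_eq_mgf]
  exact ProbabilityTheory.analyticOnNhd_mgf.mono (interior_maximal integrable_exp isOpen_Ioi)

lemma tendsto_laplace_nhdsGT_zero (hw : IntegrableOn w (Set.Ioi 0)) :
    Filter.Tendsto (fun p => ∫ x in Set.Ioi (0 : ℝ), Real.exp (-(p * x)) * w x)
      (nhdsWithin 0 (Set.Ioi 0)) (nhds (∫ x in Set.Ioi (0 : ℝ), w x)) := by
  refine tendsto_integral_filter_of_dominated_convergence (fun x => ‖w x‖) ?_ ?_ hw.norm ?_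
  · exact .of_forall fun p => .mul (by fun_prop) hw.aestronglyMeasurable
  · filter_upwards [self_mem_nhdsWithin] with p hp
    filter_upwards [ae_norm_exp_neg_mul_le_one (le_of_lt hp)] with x hx
    simpa only [norm_mul] using mul_le_of_le_one_left (norm_nonneg (w x)) hx
  · refine .of_forall fun x => tendsto_nhdsWithin_of_tendsto_nhds ?_
    have : ContinuousAt (fun p => Real.exp (-(p * x)) * w x) 0 := by fun_prop
    simpa using this.tendsto

lemma integral_eq_of_tendsto_hasLaplace (hw : IntegrableOn w (Set.Ioi 0))
    (hw0 : ∀ x ∈ Set.Ioi 0, 0 ≤ w x) {c : ℝ} (hL : ∀ p, c ≤ p → HasLaplace w p (φ p))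
    (hφ : AnalyticOnNhd ℝ φ (Set.Ioi 0)) {ℓ : ℝ}
    (hℓ : Filter.Tendsto φ (nhdsWithin 0 (Set.Ioi 0)) (nhds ℓ)) :
    ∫ x in Set.Ioi (0 : ℝ), w x = ℓ := by
  have laplace_eq : Set.EqOn (fun p => ∫ x in Set.Ioi (0 : ℝ), Real.exp (-(p * x)) * w x) φ
      (Set.Ioi 0) := by
    refine (analyticOnNhd_laplace hw hw0).eqOn_of_preconnected_of_eventuallyEq hφ
      isPreconnected_Ioi (z₀ := max c 0 + 1) (Set.mem_Ioi.2 (by positivity)) ?_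
    filter_upwards [Ioi_mem_nhds (lt_add_one (max c 0))] with p hp
    exact (hL p ((le_max_left c 0).trans (le_of_lt hp))).2
  refine tendsto_nhds_unique (tendsto_laplace_nhdsGT_zero hw) (hℓ.congr' ?_)
  filter_upwards [self_mem_nhdsWithin] with p hp using (laplace_eq hp).symm

lemma hasLaplace_rpow_div_Gamma {e p : ℝ} (he : 0 < e) (hp : 0 < p) :
    HasLaplace (fun x => x ^ (e - 1) / Real.Gamma e) p ((1 / p) ^ e) := by
  have hΓ := (Real.Gamma_pos_of_pos he).ne'
  have value : ∫ x in Set.Ioi (0 : ℝ), Real.exp (-(p * x)) * (x ^ (e - 1) / Real.Gamma e) =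
      (1 / p) ^ e := by
    simp only [mul_comm (Real.exp _), div_mul_eq_mul_div, integral_div]
    rw [Real.integral_rpow_mul_exp_neg_mul_Ioi he hp, mul_div_cancel_right₀ _ hΓ]
  exact ⟨.of_integral_ne_zero (value.trans_ne (by positivity)), value⟩

lemma hasLaplace_tsum_rpow {ι : Type*} [Countable ι] {a e : ι → ℝ} (he : ∀ i, 0 < e i) {p : ℝ}
    (hp : 0 < p) (hsum : Summable fun i => a i * (1 / p) ^ e i) :
    HasLaplace (fun x => ∑' i, a i * (x ^ (e i - 1) / Real.Gamma (e i))) p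
      (∑' i, a i * (1 / p) ^ e i) := by
  let F i x := a i * (Real.exp (-(p * x)) * (x ^ (e i - 1) / Real.Gamma (e i)))
  have integrable i : Integrable (F i) (volume.restrict (Set.Ioi 0)) :=
    (hasLaplace_rpow_div_Gamma (he i) hp).1.const_mul (a i)
  have integral_norm i : ∫ x in Set.Ioi (0 : ℝ), ‖F i x‖ = ‖a i * (1 / p) ^ e i‖ := by
    rw [norm_mul, Real.norm_of_nonneg (by positivity : 0 ≤ (1 / p) ^ e i),
      ← (hasLaplace_rpow_div_Gamma (he i) hp).2, ← integral_const_mul]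
    refine setIntegral_congr_fun measurableSet_Ioi fun x hx => ?_
    have := Real.Gamma_pos_of_pos (he i)
    have : (0 : ℝ) < x := hx
    rw [norm_mul, Real.norm_of_nonneg (r := Real.exp _ * _) (by positivity)]
  have summable : Summable fun i => ∫ x in Set.Ioi (0 : ℝ), ‖F i x‖ := by
    simpa only [integral_norm] using hsum.norm
  have tsum_eq x : Real.exp (-(p * x)) * ∑' i, a i * (x ^ (e i - 1) / Real.Gamma (e i)) =
      ∑' i, F i x := by
    rw [← tsum_mul_left]
    exact tsum_congr fun i => mul_left_comm _ _ _
  simp only [HasLaplace, tsum_eq]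
  refine ⟨integrable_tsum integrable summable, ?_⟩
  rw [← integral_tsum_of_summable_integral_norm integrable summable]
  simp only [F, integral_const_mul, (hasLaplace_rpow_div_Gamma (he _) hp).2]

end Laplace

/-! ### The Prabhakar function and its transforms -/

lemma hasDerivAt_tsum_mul_pow {𝕜 : Type*} [NontriviallyNormedField 𝕜] [CompleteSpace 𝕜]
    {c : ℕ → 𝕜} (hc : ∀ r : NNReal, Summable fun s => ‖c s‖ * (r : ℝ) ^ s) (z : 𝕜) :
    HasDerivAt (fun y => ∑' s, c s * y ^ s) (∑' s : ℕ, (s + 1) * c (s + 1) * z ^ s) z := by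
  let P := FormalMultilinearSeries.ofScalars 𝕜 c
  have hP : P.radius = ⊤ := P.radius_eq_top_of_summable_norm <| by
    simpa only [P, FormalMultilinearSeries.ofScalars_norm] using hc
  have hP' : P.derivSeries.radius = ⊤ := top_le_iff.1 (hP ▸ P.radius_le_radius_derivSeries)
  have deriv_hasSum : HasSum (fun s : ℕ => (s + 1) * c (s + 1) * z ^ s)
      (P.derivSeries.sum z 1) := by
    refine ((P.derivSeries.hasSum (x := z) (by simp [hP'])).mapL
      (ContinuousLinearMap.apply 𝕜 𝕜 (1 : 𝕜))).congr_fun fun s => ?_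
    simp [P, P.derivSeries_coeff_one, mul_comm]
  have h := (P.hasFDerivAt_sum (x := z) (by simp [hP])).hasDerivAt
  rw [← deriv_hasSum.tsum_eq] at h
  refine h.congr_of_eventuallyEq (.of_forall fun y => ?_)
  simp [P, FormalMultilinearSeries.sum, mul_comm]

lemma rpow_mul_exp_neg_le_Gamma {R y : ℝ} (hR : 0 < R) (hy : 0 ≤ y) :
    R ^ y * Real.exp (-R) ≤ Real.Gamma (y + 1) := by
  have hi := Real.GammaIntegral_convergent (s := y + 1) (by linarith)
  have hsub : Set.Ioi R ⊆ Set.Ioi 0 := Set.Ioi_subset_Ioi hR.le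
  calc R ^ y * Real.exp (-R) = ∫ x in Set.Ioi R, R ^ y * Real.exp (-x) := by
        rw [integral_const_mul, integral_exp_neg_Ioi]
    _ ≤ ∫ x in Set.Ioi R, Real.exp (-x) * x ^ (y + 1 - 1) := by
        refine setIntegral_mono_on ((integrableOn_exp_neg_Ioi R).const_mul _) (hi.mono_set hsub)
          measurableSet_Ioi fun x hx => ?_
        rw [add_sub_cancel_right, mul_comm]
        gcongr
        exact le_of_lt hx
    _ ≤ ∫ x in Set.Ioi (0 : ℝ), Real.exp (-x) * x ^ (y + 1 - 1) := by
        refine setIntegral_mono_set hi ?_ hsub.eventuallyLE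
        filter_upwards [ae_restrict_mem measurableSet_Ioi] with x hx
        exact mul_nonneg (Real.exp_pos _).le (Real.rpow_nonneg (le_of_lt hx) _)
    _ = Real.Gamma (y + 1) := (Real.Gamma_eq_integral (by linarith)).symm

lemma exists_eventually_mul_pow_le_Gamma {a q : ℝ} (ha : 0 < a) (b : ℝ) (hq : 0 < q) :
    ∃ C > 0, ∀ᶠ s : ℕ in Filter.atTop, C * q ^ s ≤ Real.Gamma (a * s + b) := by
  let R : ℝ := q ^ a⁻¹
  have hR : 0 < R := by positivity
  have hRa : R ^ a = q := Real.rpow_inv_rpow hq.le ha.ne'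
  have large : ∀ᶠ s : ℕ in Filter.atTop, 1 ≤ a * s + b :=
    (Filter.tendsto_atTop_add_const_right _ b
      (tendsto_natCast_atTop_atTop.const_mul_atTop ha)).eventually_ge_atTop 1
  refine ⟨R ^ (b - 1) * Real.exp (-R), by positivity, ?_⟩
  filter_upwards [large] with s hs
  calc R ^ (b - 1) * Real.exp (-R) * q ^ s = R ^ (a * s + b - 1) * Real.exp (-R) := by
        rw [add_sub_assoc, Real.rpow_add hR, Real.rpow_mul_natCast hR.le, hRa]
        ring
    _ ≤ Real.Gamma (a * s + b) := by
        simpa only [sub_add_cancel] using rpow_mul_exp_neg_le_Gamma hR (sub_nonneg.2 hs)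

lemma hasSum_ascPochhammer_div_factorial (γ : ℝ) {z : ℝ} (hz : |z| < 1) :
    HasSum (fun s : ℕ => (ascPochhammer ℝ s).eval γ / s.factorial * z ^ s) ((1 - z) ^ (-γ)) := by
  have h := (Real.one_add_rpow_hasFPowerSeriesOnBall_zero (a := -γ)).hasSum (y := -z)
    (by simpa [enorm_eq_nnnorm, ← NNReal.coe_lt_coe] using hz)
  rw [zero_add, ← sub_eq_add_neg] at h
  refine h.congr_fun fun s => ?_
  have multichoose : Ring.multichoose γ s = (ascPochhammer ℝ s).eval γ / s.factorial := by
    rw [eq_div_iff (by positivity), mul_comm, ← nsmul_eq_mul,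
      Ring.factorial_nsmul_multichoose_eq_ascPochhammer, ascPochhammer_smeval_eq_eval]
  rw [binomialSeries_apply, Ring.choose_neg', multichoose, List.ofFn_const, List.prod_replicate,
    neg_pow z, smul_eq_mul]
  rcases Nat.even_or_odd s with hs | hs <;>
    simp [hs.neg_one_pow, Int.negOnePow_def, Units.smul_def]

section Prabhakar

variable {a : ℝ} (b γ z : ℝ)

lemma prabhakar_eq_tsum : prabhakar a b γ z = ∑' s : ℕ,
    (ascPochhammer ℝ s).eval γ / (s.factorial * Real.Gamma (a * s + b)) * z ^ s :=
  tsum_congr fun _ => mul_div_right_comm _ _ _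

lemma summable_prabhakar (ha : 0 < a) (r : NNReal) :
    Summable fun s : ℕ =>
      ‖(ascPochhammer ℝ s).eval γ / (s.factorial * Real.Gamma (a * s + b))‖ * (r : ℝ) ^ s := by
  obtain ⟨C, hC, hΓ⟩ := exists_eventually_mul_pow_le_Gamma ha b (q := 2 * (r + 1)) (by positivity)
  have majorant := ((hasSum_ascPochhammer_div_factorial γ (z := 1 / 2)
    (by norm_num [abs_of_pos])).summable.norm).mul_left C⁻¹
  refine majorant.of_norm_bounded_eventually_nat ?_
  filter_upwards [hΓ] with s hs
  have Gamma_pos : 0 < Real.Gamma (a * s + b) := lt_of_lt_of_le (by positivity) hs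
  simp only [norm_mul, norm_norm, norm_div, norm_pow, Real.norm_natCast,
    Real.norm_of_nonneg Gamma_pos.le, Real.norm_of_nonneg r.coe_nonneg, norm_one, Real.norm_two]
  calc _ ≤ ‖(ascPochhammer ℝ s).eval γ‖ / (s.factorial * (C * (2 * (r + 1)) ^ s)) *
          (r + 1) ^ s := by
        gcongr
        exact le_add_of_nonneg_right zero_le_one
    _ = _ := by
        rw [mul_pow, one_div_pow]
        field_simp

lemma hasDerivAt_prabhakar (ha : 0 < a) :
    HasDerivAt (prabhakar a b γ) (γ * prabhakar a (a + b) (γ + 1) z) z := by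
  have h := hasDerivAt_tsum_mul_pow (summable_prabhakar b γ ha) z
  simp only [← prabhakar_eq_tsum] at h
  refine h.congr_deriv ?_
  rw [prabhakar_eq_tsum, ← tsum_mul_left]
  refine tsum_congr fun s => ?_
  have index : a * (s + 1 : ℕ) + b = a * s + (a + b) := by push_cast; ring
  rw [ascPochhammer_succ_left, index, Nat.factorial_succ]
  simp only [eval_mul, eval_X, eval_comp, eval_add, eval_one, Nat.cast_mul, Nat.cast_succ]
  field_simp

lemma continuous_prabhakar (ha : 0 < a) : Continuous (prabhakar a b γ) :=
  continuous_iff_continuousAt.2 fun z => (hasDerivAt_prabhakar b γ z ha).continuousAt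

end Prabhakar

/-- The transition density kernel `W^{(μ)}_α`, with rate `l`, in series form:
`-W^{(μ)}_α` is the derivative of `x ↦ E^μ_{α,1}(-l x^α)`. -/
noncomputable def prabhakarKernel (α μ l x : ℝ) : ℝ :=
  l * x ^ (α - 1) * ∑' s : ℕ, ((ascPochhammer ℝ (s + 1)).eval μ / (((s + 1).factorial : ℝ))) *
    (-(l * x ^ α)) ^ s / Real.Gamma (α * s + α)

section Kernel

variable {α : ℝ} (μ l : ℝ)

lemma prabhakarKernel_eq (hα : 0 < α) (x : ℝ) :
    prabhakarKernel α μ l x =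
      l * (α * x ^ (α - 1)) * (μ * prabhakar α (α + 1) (μ + 1) (-(l * x ^ α))) := by
  suffices ∀ s : ℕ, (ascPochhammer ℝ (s + 1)).eval μ / (s + 1).factorial * (-(l * x ^ α)) ^ s /
      Real.Gamma (α * s + α) = α * (μ * ((ascPochhammer ℝ s).eval (μ + 1) * (-(l * x ^ α)) ^ s /
        (s.factorial * Real.Gamma (α * s + (α + 1))))) by
    simp only [prabhakarKernel, prabhakar, this, tsum_mul_left]
    ring
  intro s
  have hpos : 0 < α * ((s : ℝ) + 1) := by positivity
  rw [← add_assoc, ← mul_add_one α (s : ℝ), Real.Gamma_add_one hpos.ne', ascPochhammer_succ_left,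
    Nat.factorial_succ]
  simp only [eval_mul, eval_X, eval_comp, eval_add, eval_one, Nat.cast_mul, Nat.cast_succ]
  field_simp

lemma hasDerivAt_prabhakar_neg_rpow (hα : 0 < α) {x : ℝ} (hx : 0 < x) :
    HasDerivAt (fun y => prabhakar α 1 μ (-(l * y ^ α))) (-prabhakarKernel α μ l x) x := by
  have inner := ((Real.hasDerivAt_rpow_const (p := α) (Or.inl hx.ne')).const_mul l).neg
  refine ((hasDerivAt_prabhakar 1 μ (-(l * x ^ α)) hα).comp x inner).congr_deriv ?_
  rw [prabhakarKernel_eq μ l hα]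
  ring

lemma continuous_prabhakar_neg_rpow (hα : 0 < α) (b : ℝ) :
    Continuous fun y => prabhakar α b μ (-(l * y ^ α)) :=
  (continuous_prabhakar b μ hα).comp ((Real.continuous_rpow_const hα.le).const_mul l).neg

lemma continuousOn_prabhakarKernel (hα : 0 < α) :
    ContinuousOn (prabhakarKernel α μ l) (Set.Ioi 0) := by
  have hrpow : ContinuousOn (fun x : ℝ => x ^ (α - 1)) (Set.Ioi 0) :=
    continuousOn_id.rpow_const fun x hx => Or.inl (ne_of_gt hx)
  refine (((hrpow.const_mul α).const_mul l).mul
    ((continuous_prabhakar_neg_rpow (μ + 1) l hα (α + 1)).continuousOn.const_mul μ)).congr ?_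
  exact fun x _ => prabhakarKernel_eq μ l hα x

variable {l} {p : ℝ}

lemma hasSum_rpow_div_rpow (hp : 0 < p) (hl : |l| < p ^ α) :
    HasSum (fun s : ℕ => (ascPochhammer ℝ s).eval μ / s.factorial * (-l) ^ s * (1 / p) ^ (α * s))
      ((p ^ α / (l + p ^ α)) ^ μ) := by
  have hpα : 0 < p ^ α := by positivity
  have value : (1 - -l / p ^ α) ^ (-μ) = (p ^ α / (l + p ^ α)) ^ μ := by
    rw [Real.rpow_neg_eq_inv_rpow, one_sub_div hpα.ne', inv_div, sub_neg_eq_add, add_comm]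
  rw [← value]
  refine (hasSum_ascPochhammer_div_factorial μ
    (by rwa [abs_div, abs_neg, abs_of_pos hpα, div_lt_one hpα])).congr_fun fun s => ?_
  rw [Real.rpow_mul_natCast (by positivity), Real.div_rpow one_pos.le hp.le, Real.one_rpow,
    mul_assoc, ← mul_pow, mul_one_div]

lemma hasLaplace_prabhakar_neg_rpow (hα : 0 < α) (hp : 0 < p) (hl : |l| < p ^ α) :
    HasLaplace (fun x => prabhakar α 1 μ (-(l * x ^ α))) p
      (p⁻¹ * (p ^ α / (l + p ^ α)) ^ μ) := by
  have symbol : HasSum (fun s : ℕ => (ascPochhammer ℝ s).eval μ / s.factorial * (-l) ^ s *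
      (1 / p) ^ (α * s + 1)) (p⁻¹ * (p ^ α / (l + p ^ α)) ^ μ) := by
    refine ((hasSum_rpow_div_rpow μ hp hl).mul_left p⁻¹).congr_fun fun s => ?_
    rw [Real.rpow_add_one (by positivity)]
    ring
  rw [← symbol.tsum_eq]
  refine (hasLaplace_tsum_rpow (fun s => by positivity) hp symbol.summable).congr fun x hx => ?_
  refine tsum_congr fun s => ?_
  rw [add_sub_cancel_right, Real.rpow_mul_natCast (le_of_lt hx), ← neg_mul, mul_pow]
  ring

lemma hasLaplace_prabhakarKernel (hα : 0 < α) (hp : 0 < p) (hl : |l| < p ^ α) :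
    HasLaplace (prabhakarKernel α μ l) p (1 - (p ^ α / (l + p ^ α)) ^ μ) := by
  have symbol : HasSum (fun s : ℕ => (ascPochhammer ℝ (s + 1)).eval μ / (s + 1).factorial *
      (-l) ^ s * l * (1 / p) ^ (α * s + α)) (1 - (p ^ α / (l + p ^ α)) ^ μ) := by
    have tail := ((hasSum_nat_add_iff' 1).2 (hasSum_rpow_div_rpow μ hp hl)).neg
    simp only [Finset.sum_range_one, ascPochhammer_zero, eval_one, Nat.factorial_zero,
      Nat.cast_one, Nat.cast_zero, pow_zero, mul_zero, Real.rpow_zero, div_one, mul_one,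
      neg_sub] at tail
    refine tail.congr_fun fun s => ?_
    rw [Nat.cast_succ, mul_add_one α (s : ℝ)]
    ring
  rw [← symbol.tsum_eq]
  refine (hasLaplace_tsum_rpow (fun s => by positivity) hp symbol.summable).congr fun x hx => ?_
  simp only [prabhakarKernel, ← tsum_mul_left]
  refine tsum_congr fun s => ?_
  rw [add_sub_assoc, Real.rpow_add hx, Real.rpow_mul_natCast (le_of_lt hx), ← neg_mul, mul_pow]
  ring

end Kernel

/-! ### Normalization of the kernel -/

section Normalization

lemma integrableOn_Ioi_deriv_of_nonpos_of_le {g g' : ℝ → ℝ} {a m : ℝ}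
    (hcont : ContinuousWithinAt g (Set.Ici a) a) (hderiv : ∀ x ∈ Set.Ioi a, HasDerivAt g (g' x) x)
    (hg' : ∀ x ∈ Set.Ioi a, g' x ≤ 0) (hm : ∀ x ∈ Set.Ioi a, m ≤ g x) :
    IntegrableOn g' (Set.Ioi a) := by
  have anti : AntitoneOn g (Set.Ioi a) := by
    refine antitoneOn_of_hasDerivWithinAt_nonpos (convex_Ioi a) (f' := g')
      (fun x hx => (hderiv x hx).continuousAt.continuousWithinAt) ?_ ?_
    · simpa only [interior_Ioi] using fun x hx => (hderiv x hx).hasDerivWithinAt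
    · simpa only [interior_Ioi] using hg'
  have mem (x : ℝ) : max x (a + 1) ∈ Set.Ioi a := (lt_add_one a).trans_le (le_max_right _ _)
  have limit : Filter.Tendsto (fun x => g (max x (a + 1))) Filter.atTop
      (nhds (⨅ x, g (max x (a + 1)))) := by
    refine tendsto_atTop_ciInf (fun x y hxy => ?_) ⟨m, ?_⟩
    · exact anti (mem x) (mem y) (max_le_max_right _ hxy)
    · rintro _ ⟨x, rfl⟩
      exact hm _ (mem x)
  refine integrableOn_Ioi_deriv_of_nonpos hcont hderiv hg' (limit.congr' ?_)
  filter_upwards [Filter.eventually_ge_atTop (a + 1)] with x hx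
  rw [max_eq_left hx]

variable {α μ l : ℝ}

lemma analyticOnNhd_rpow_div_const_add_rpow (α μ : ℝ) (hl : 0 ≤ l) :
    AnalyticOnNhd ℝ (fun p : ℝ => (p ^ α / (l + p ^ α)) ^ μ) (Set.Ioi 0) := by
  have analyticAt_rpow {p : ℝ} (hp : 0 < p) (β : ℝ) : AnalyticAt ℝ (fun q : ℝ => q ^ β) p :=
    (Real.contDiffAt_rpow_const_of_ne hp.ne').analyticAt
  intro p hp
  have hpα : 0 < p ^ α := Real.rpow_pos_of_pos hp α
  have hlp : 0 < l + p ^ α := by positivity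
  exact AnalyticAt.fun_comp (f := fun p : ℝ => p ^ α / (l + p ^ α))
    (analyticAt_rpow (div_pos hpα hlp) μ)
    ((analyticAt_rpow hp α).div (analyticAt_const.add (analyticAt_rpow hp α)) hlp.ne')

lemma tendsto_rpow_div_const_add_rpow (hα : 0 < α) (hμ : 0 < μ) (hl : l ≠ 0) :
    Filter.Tendsto (fun p : ℝ => (p ^ α / (l + p ^ α)) ^ μ) (nhdsWithin 0 (Set.Ioi 0))
      (nhds 0) := by
  have hrpow : ContinuousAt (fun p : ℝ => p ^ α) 0 :=
    Real.continuousAt_rpow_const 0 α (Or.inr hα.le)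
  have h : ContinuousAt (fun p : ℝ => (p ^ α / (l + p ^ α)) ^ μ) 0 :=
    (hrpow.div (continuousAt_const.add hrpow)
      (by simpa [Real.zero_rpow hα.ne'] using hl)).rpow_const (Or.inr hμ.le)
  simpa [Real.zero_rpow hα.ne', Real.zero_rpow hμ.ne'] using h.tendsto.mono_left nhdsWithin_le_nhds

lemma exists_forall_abs_lt_rpow (hα : 0 < α) (l : ℝ) : ∃ c > 0, ∀ p, c ≤ p → |l| < p ^ α := by
  obtain ⟨c, hc⟩ := Filter.eventually_atTop.1 ((tendsto_rpow_atTop hα).eventually_gt_atTop |l|)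
  exact ⟨max c 1, by positivity, fun p hp => hc p ((le_max_left c 1).trans hp)⟩

lemma prabhakar_neg_rpow_nonneg (hα : α ∈ Set.Ioc (0 : ℝ) 1) (hμ : μ ∈ Set.Icc (0 : ℝ) 1)
    (hl : 0 < l) {x : ℝ} (hx : 0 < x) : 0 ≤ prabhakar α 1 μ (-(l * x ^ α)) := by
  obtain ⟨c, hc, hlc⟩ := exists_forall_abs_lt_rpow hα.1 l
  exact nonneg_of_hasLaplace (continuous_prabhakar_neg_rpow μ l hα.1 1).continuousOn
    (fun p hp => hasLaplace_prabhakar_neg_rpow μ hα.1 (hc.trans_le hp) (hlc p hp))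
    (completelyMonotoneUpTo_inv_mul_rpow_div (Set.Ioc_subset_Icc_self hα) hμ hl hc) hx

lemma prabhakarKernel_nonneg (hα : α ∈ Set.Ioc (0 : ℝ) 1) (hμ : μ ∈ Set.Icc (0 : ℝ) 1)
    (hl : 0 < l) {x : ℝ} (hx : 0 < x) : 0 ≤ prabhakarKernel α μ l x := by
  obtain ⟨c, hc, hlc⟩ := exists_forall_abs_lt_rpow hα.1 l
  exact nonneg_of_hasLaplace (continuousOn_prabhakarKernel μ l hα.1)
    (fun p hp => hasLaplace_prabhakarKernel μ hα.1 (hc.trans_le hp) (hlc p hp))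
    (completelyMonotoneUpTo_one_sub_rpow_div (Set.Ioc_subset_Icc_self hα) hμ hl hc) hx

lemma integrableOn_prabhakarKernel (hα : α ∈ Set.Ioc (0 : ℝ) 1) (hμ : μ ∈ Set.Icc (0 : ℝ) 1)
    (hl : 0 < l) : IntegrableOn (prabhakarKernel α μ l) (Set.Ioi 0) := by
  simpa using (integrableOn_Ioi_deriv_of_nonpos_of_le
    (continuous_prabhakar_neg_rpow μ l hα.1 1).continuousWithinAt
    (fun x hx => hasDerivAt_prabhakar_neg_rpow μ l hα.1 hx)
    (fun x hx => neg_nonpos.2 (prabhakarKernel_nonneg hα hμ hl hx))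
    (fun x hx => prabhakar_neg_rpow_nonneg hα hμ hl hx)).neg

lemma integral_prabhakarKernel (hα : α ∈ Set.Ioc (0 : ℝ) 1) (hμ : μ ∈ Set.Ioc (0 : ℝ) 1)
    (hl : 0 < l) :
    ∫ x in Set.Ioi (0 : ℝ), prabhakarKernel α μ l x = 1 := by
  have hμ' := Set.Ioc_subset_Icc_self hμ
  obtain ⟨c, hc, hlc⟩ := exists_forall_abs_lt_rpow hα.1 l
  refine integral_eq_of_tendsto_hasLaplace (integrableOn_prabhakarKernel hα hμ' hl)
    (fun x hx => prabhakarKernel_nonneg hα hμ' hl hx)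
    (fun p hp => hasLaplace_prabhakarKernel μ hα.1 (hc.trans_le hp) (hlc p hp))
    (analyticOnNhd_const.sub (analyticOnNhd_rpow_div_const_add_rpow α μ hl.le)) ?_
  simpa only [sub_zero] using (tendsto_rpow_div_const_add_rpow hα.1 hμ.1 hl.ne').const_sub 1

end Normalization

/-- For `α, μ ∈ (0,1]` and `λ₀ > 0`: for every `x > 0`,
`d/dx [E^μ_{α,1}(−λ₀ x^α)] = −λ₀ x^{α−1} Σ_{s=0}^∞ ((μ)_{s+1}/(s+1)!)(−λ₀x^α)^s/Γ(αs+α)`,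
and the transition density kernel `W^{(μ)}_α(x) = −d/dx[E^μ_{α,1}(−λ₀x^α)]` is normalized:
`∫_0^∞ W^{(μ)}_α(x) dx = 1`. -/
theorem prabhakar_transition_density (α μ lam₀ : ℝ)
    (hα : α ∈ Set.Ioc (0 : ℝ) 1) (hμ : μ ∈ Set.Ioc (0 : ℝ) 1) (hlam : 0 < lam₀) :
    (∀ x : ℝ, 0 < x →
      HasDerivAt (fun y : ℝ => prabhakar α 1 μ (-(lam₀ * y ^ α)))
        (-(lam₀ * x ^ (α - 1) * ∑' s : ℕ,
          ((ascPochhammer ℝ (s + 1)).eval μ / (((s + 1).factorial : ℝ))) *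
            (-(lam₀ * x ^ α)) ^ s / Real.Gamma (α * s + α))) x) ∧
    (∫ x in Set.Ioi (0 : ℝ), lam₀ * x ^ (α - 1) * ∑' s : ℕ,
        ((ascPochhammer ℝ (s + 1)).eval μ / (((s + 1).factorial : ℝ))) *
          (-(lam₀ * x ^ α)) ^ s / Real.Gamma (α * s + α)) = 1 :=
  ⟨fun _ hx => hasDerivAt_prabhakar_neg_rpow μ lam₀ hα.1 hx,
    integral_prabhakarKernel hα hμ hlam⟩
end

section
/- For every μ ∈ (0,1) and every a > 0, the fractional power of a admits the Lévy–Khintchine representation ∫_0^∞ (1 − e^{−aτ}) τ^{−1−μ} dτ = −Γ(−μ) · a^μ, equivalently a^μ = (−1/Γ(−μ)) ∫_0^∞ (1 − e^{−aτ}) τ^{−1−μ} dτ, where −Γ(−μ) = Γ(1−μ)/μ > 0. -/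
open MeasureTheory

open Set Filter Topology Asymptotics

/-!
Up to the factor `a ^ μ` produced by the substitution `t = a * τ`, the integral is the Mellin
transform of `1 - exp (-t)` at `s = -μ`. Integration by parts trades it for the transform of the
derivative `exp (-t)` at `s + 1`, which is `Γ (s + 1) = s * Γ s`. The boundary terms vanish
in the strip `-1 < re s < 0`, because `1 - exp (-t)` is `O(t)` at `0` and bounded at infinity.
-/

section MellinDerivative

variable {E : Type*} [NormedAddCommGroup E] [NormedSpace ℂ E] {f f' : ℝ → E} {s : ℂ} {a b : ℝ}

lemma isBigO_cpow_smul_rpow_sub {l : Filter ℝ} (hl : ∀ᶠ t in l, 0 < t)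
    (hf : f =O[l] (· ^ (-a))) :
    (fun t : ℝ => (t : ℂ) ^ s • f t) =O[l] (· ^ (s.re - a)) := by
  have hcpow : (fun t : ℝ => (t : ℂ) ^ s) =O[l] (· ^ s.re) := by
    refine .of_bound' ?_
    filter_upwards [hl] with t ht
    rw [Complex.norm_cpow_eq_rpow_re_of_pos ht]
    exact le_abs_self _
  refine (hcpow.smul hf).congr' .rfl ?_
  filter_upwards [hl] with t ht
  rw [smul_eq_mul, ← Real.rpow_add ht, sub_eq_add_neg]

lemma tendsto_cpow_smul_nhdsGT_zero_of_isBigO (hf : f =O[𝓝[>] 0] (· ^ (-b))) (hb : b < s.re) :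
    Tendsto (fun t : ℝ => (t : ℂ) ^ s • f t) (𝓝[>] 0) (𝓝 0) := by
  have hpow : Tendsto (fun t : ℝ => t ^ (s.re - b)) (𝓝[>] 0) (𝓝 0) := by
    have hcont := Real.continuousAt_rpow_const 0 (s.re - b) (.inr (sub_pos.mpr hb).le)
    simpa [Real.zero_rpow (sub_pos.mpr hb).ne'] using
      hcont.tendsto.mono_left nhdsWithin_le_nhds
  exact (isBigO_cpow_smul_rpow_sub self_mem_nhdsWithin hf).trans_tendsto hpow

lemma tendsto_cpow_smul_atTop_of_isBigO (hf : f =O[atTop] (· ^ (-a))) (ha : s.re < a) :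
    Tendsto (fun t : ℝ => (t : ℂ) ^ s • f t) atTop (𝓝 0) := by
  have hpow : Tendsto (fun t : ℝ => t ^ (s.re - a)) atTop (𝓝 0) := by
    simpa using tendsto_rpow_neg_atTop (sub_pos.mpr ha)
  exact (isBigO_cpow_smul_rpow_sub (eventually_gt_atTop 0) hf).trans_tendsto hpow

lemma mellin_eq_neg_inv_smul_of_hasDerivAt [CompleteSpace E] (hs : s ≠ 0)
    (hderiv : ∀ t ∈ Ioi 0, HasDerivAt f (f' t) t)
    (hf : MellinConvergent f s) (hf' : MellinConvergent f' (s + 1))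
    (hzero : Tendsto (fun t : ℝ => (t : ℂ) ^ s • f t) (𝓝[>] 0) (𝓝 0))
    (htop : Tendsto (fun t : ℝ => (t : ℂ) ^ s • f t) atTop (𝓝 0)) :
    mellin f s = -(s⁻¹ • mellin f' (s + 1)) := by
  rw [MellinConvergent, add_sub_cancel_right] at hf'
  have hsf : IntegrableOn (fun t : ℝ => s • (t : ℂ) ^ (s - 1) • f t) (Ioi 0) := hf.smul s
  have hprod : ∀ t ∈ Ioi (0 : ℝ), HasDerivAt (fun t : ℝ => (t : ℂ) ^ s • f t)
      ((t : ℂ) ^ s • f' t + s • (t : ℂ) ^ (s - 1) • f t) t := fun t ht => by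
    rw [← mul_smul]
    exact (hasDerivAt_ofReal_cpow_const (ne_of_gt ht) hs).smul (hderiv t ht)
  have hcont : ContinuousWithinAt (fun t : ℝ => (t : ℂ) ^ s • f t) (Ici 0) 0 := by
    rw [← continuousWithinAt_Ioi_iff_Ici]
    simpa [ContinuousWithinAt, Complex.zero_cpow hs] using hzero
  have hparts : mellin f' (s + 1) + s • mellin f s = 0 := by
    have hftc := integral_Ioi_of_hasDerivAt_of_tendsto hcont hprod (hf'.add hsf) htop
    rw [mellin, mellin, add_sub_cancel_right, ← integral_smul, ← integral_add hf' hsf]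
    simpa [Complex.zero_cpow hs] using hftc
  rw [eq_neg_of_add_eq_zero_left hparts, smul_neg, neg_neg, inv_smul_smul₀ hs]

lemma hasMellin_of_hasDerivAt_of_isBigO_rpow [CompleteSpace E] (hs : s ≠ 0)
    (hderiv : ∀ t ∈ Ioi 0, HasDerivAt f (f' t) t) (hf' : MellinConvergent f' (s + 1))
    (htop : f =O[atTop] (· ^ (-a))) (ha : s.re < a)
    (hzero : f =O[𝓝[>] 0] (· ^ (-b))) (hb : b < s.re) :
    HasMellin f s (-(s⁻¹ • mellin f' (s + 1))) := by
  have hcont : ContinuousOn f (Ioi 0) := fun t ht => (hderiv t ht).continuousAt.continuousWithinAt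
  have hf : MellinConvergent f s :=
    mellinConvergent_of_isBigO_rpow (hcont.locallyIntegrableOn measurableSet_Ioi) htop ha hzero hb
  exact ⟨hf, mellin_eq_neg_inv_smul_of_hasDerivAt hs hderiv hf hf'
    (tendsto_cpow_smul_nhdsGT_zero_of_isBigO hzero hb) (tendsto_cpow_smul_atTop_of_isBigO htop ha)⟩

end MellinDerivative

lemma mellin_ofReal (f : ℝ → ℝ) (s : ℝ) :
    mellin (fun t => (f t : ℂ)) s = ((∫ t in Ioi 0, t ^ (s - 1) * f t : ℝ) : ℂ) := by
  rw [mellin, ← integral_complex_ofReal]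
  refine setIntegral_congr_fun measurableSet_Ioi fun t ht => ?_
  simp [Complex.ofReal_cpow (le_of_lt ht)]

lemma neg_Gamma_neg_eq_div {μ : ℝ} (hμ : μ ≠ 0) :
    -Real.Gamma (-μ) = Real.Gamma (1 - μ) / μ := by
  rw [sub_eq_neg_add, Real.Gamma_add_one (neg_ne_zero.mpr hμ), neg_mul, neg_div,
    mul_div_cancel_left₀ _ hμ]

lemma hasMellin_exp_neg {s : ℂ} (hs : 0 < s.re) :
    HasMellin (fun t : ℝ => ((Real.exp (-t) : ℝ) : ℂ)) s (Complex.Gamma s) := by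
  refine ⟨?_, ?_⟩
  · simpa only [MellinConvergent, smul_eq_mul, mul_comm] using Complex.GammaIntegral_convergent hs
  · rw [Complex.Gamma_eq_integral hs, Complex.GammaIntegral_eq_mellin]

lemma hasMellin_one_sub_exp_neg {s : ℂ} (hs : s.re ∈ Ioo (-1) 0) :
    HasMellin (fun t : ℝ => ((1 - Real.exp (-t) : ℝ) : ℂ)) s (-Complex.Gamma s) := by
  have hs0 : s ≠ 0 := by
    rintro rfl
    exact hs.2.false
  have hderiv (t : ℝ) : HasDerivAt (fun t : ℝ => ((1 - Real.exp (-t) : ℝ) : ℂ))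
      ((Real.exp (-t) : ℝ) : ℂ) t := by
    simpa using ((hasDerivAt_neg t).exp.const_sub 1).ofReal_comp
  have hzero : (fun t : ℝ => ((1 - Real.exp (-t) : ℝ) : ℂ)) =O[𝓝[>] 0] (· ^ (-(-1 : ℝ))) := by
    simpa using (hderiv 0).isBigO_sub.mono nhdsWithin_le_nhds
  have htop : (fun t : ℝ => ((1 - Real.exp (-t) : ℝ) : ℂ)) =O[atTop] (· ^ (-(0 : ℝ))) := by
    have hlim := (Real.tendsto_exp_neg_atTop_nhds_zero.const_sub 1).ofReal
    simpa using hlim.isBigO_one ℝ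
  have hs1 : 0 < (s + 1).re := by simpa using neg_lt_iff_pos_add.mp hs.1
  obtain ⟨hconv, hGamma⟩ := hasMellin_exp_neg hs1
  have h := hasMellin_of_hasDerivAt_of_isBigO_rpow hs0 (fun t _ => hderiv t) hconv
    htop hs.2 hzero hs.1
  rwa [hGamma, Complex.Gamma_add_one s hs0, smul_eq_mul, inv_mul_cancel_left₀ hs0] at h

theorem fractional_power_levy_khintchine_general {μ : ℂ} {a : ℝ} (hμ : μ.re ∈ Ioo 0 1)
    (ha : 0 < a) :
    HasMellin (fun τ : ℝ => ((1 - Real.exp (-(a * τ)) : ℝ) : ℂ)) (-μ)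
      (-Complex.Gamma (-μ) * (a : ℂ) ^ μ) := by
  have hs : (-μ).re ∈ Ioo (-1) 0 := by simpa [and_comm] using hμ
  obtain ⟨hconv, hval⟩ := hasMellin_one_sub_exp_neg hs
  refine ⟨(MellinConvergent.comp_mul_left ha).mpr hconv, ?_⟩
  rw [mellin_comp_mul_left (fun t => ((1 - Real.exp (-t) : ℝ) : ℂ)) (-μ) ha, hval, neg_neg,
    smul_eq_mul, mul_comm]

/-- For `μ ∈ (0,1)` and `a > 0`, the Lévy–Khintchine representation of the fractional power:
`∫_0^∞ (1 − e^{−aτ}) τ^{−1−μ} dτ = −Γ(−μ)·a^μ`, where `−Γ(−μ) = Γ(1−μ)/μ > 0`. -/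
theorem fractional_power_levy_khintchine (μ a : ℝ)
    (hμ : μ ∈ Set.Ioo (0 : ℝ) 1) (ha : 0 < a) :
    (∫ τ in Set.Ioi (0 : ℝ), (1 - Real.exp (-(a * τ))) * τ ^ (-1 - μ))
        = -Real.Gamma (-μ) * a ^ μ ∧
    -Real.Gamma (-μ) = Real.Gamma (1 - μ) / μ ∧ 0 < Real.Gamma (1 - μ) / μ := by
  refine ⟨?_, neg_Gamma_neg_eq_div hμ.1.ne',
    div_pos (Real.Gamma_pos_of_pos (sub_pos.mpr hμ.2)) hμ.1⟩
  have hval := (fractional_power_levy_khintchine_general (μ := μ) (by simpa using hμ) ha).2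
  rw [← Complex.ofReal_neg, mellin_ofReal, Complex.Gamma_ofReal,
    ← Complex.ofReal_cpow ha.le] at hval
  norm_cast at hval
  simpa only [mul_comm, show -1 - μ = -μ - 1 by ring] using hval
end
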